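/- arXiv:1605.02469 — 2 statements merged into one kernel-verified Lean document; each statement's English description precedes it below -/
import Mathlib

section
/- Let G be a doubly regular tournament on v = 4m−1 vertices (m ≥ 1) containing a transitive subtournament of size s. If √(1+12m) is an integer (i.e., ε := √(1+12m) − ⌊√(1+12m)⌋ = 0), then s ≤ −2 + √(1+12m). -/
open Matrix Finset

/-- A digraph on `v` vertices, given by its adjacency matrix: entries in `{0,1}`, zero diagonal. -/
def IsDigraph {v : ℕ} (A : Matrix (Fin v) (Fin v) ℂ) : Prop :=
  (∀ x y, A x y = 0 ∨ A x y = 1) ∧ ∀ x, A x x = 0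

/-- A tournament: a digraph with `A + Aᵀ = J - I`. -/
def IsTournament {v : ℕ} (A : Matrix (Fin v) (Fin v) ℂ) : Prop :=
  IsDigraph A ∧ A + Aᵀ = Matrix.of (fun _ _ => 1) - 1

/-- A doubly regular tournament: every vertex dominates exactly `(v-1)/2` vertices and every
pair of distinct vertices jointly dominates exactly `(v-3)/4` vertices (so `v ≡ 3 (mod 4)`). -/
def IsDRT {v : ℕ} (A : Matrix (Fin v) (Fin v) ℂ) : Prop :=
  IsTournament A ∧ v % 4 = 3 ∧
  (∀ x, (univ.filter fun y => A x y = 1).card = (v - 1) / 2) ∧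
  (∀ x y, x ≠ y → (univ.filter fun z => A x z = 1 ∧ A y z = 1).card = (v - 3) / 4)

/-- `T` is a transitive subtournament of the digraph with adjacency matrix `A`. -/
def IsTransSubtournament {v : ℕ} (A : Matrix (Fin v) (Fin v) ℂ) (T : Finset (Fin v)) : Prop :=
  (∀ x ∈ T, ∀ y ∈ T, x ≠ y → Xor' (A x y = 1) (A y x = 1)) ∧
  (∀ x ∈ T, ∀ y ∈ T, ∀ z ∈ T, A x y = 1 → A y z = 1 → A x z = 1)

theorem aux_sum (n : ℕ) (c : ℤ) : 3 * ∑ i ∈ range n, (2 * (i : ℤ) - c) ^ 2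
    = 2 * n * (n - 1) * (2 * n - 1) - 6 * c * n * (n - 1) + 3 * c ^ 2 * n := by
  induction n with
  | zero => simp
  | succ k ih => rw [sum_range_succ, mul_add, ih]; push_cast; ring

/-- If a doubly regular tournament on `v = 4m-1` vertices contains a transitive
subtournament of size `s` and `√(1+12m)` is an integer, then `s ≤ -2 + √(1+12m)`. -/
theorem drt_bound_sqrt_integer
    {m s : ℕ} (hm : 1 ≤ m)
    (A : Matrix (Fin (4 * m - 1)) (Fin (4 * m - 1)) ℂ) (hA : IsDRT A)
    (T : Finset (Fin (4 * m - 1))) (hT : IsTransSubtournament A T) (hTcard : T.card = s)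
    (heps : Real.sqrt (1 + 12 * (m : ℝ)) - (⌊Real.sqrt (1 + 12 * (m : ℝ))⌋ : ℝ) = 0) :
    (s : ℝ) ≤ -2 + Real.sqrt (1 + 12 * (m : ℝ)) := by
  classical
  obtain ⟨⟨⟨h01, hdiag⟩, -⟩, -, hrow, hpair⟩ := hA
  obtain ⟨hxor, htr⟩ := hT
  set d : Fin (4 * m - 1) → ℕ := fun z => (T.filter fun x => A x z = 1).card with hd
  have hlt : ∀ x ∈ T, ∀ y ∈ T, A x y = 1 → d x < d y := by
    intro x hx y hy hxy
    apply card_lt_card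
    rw [Finset.ssubset_iff_of_subset]
    · exact ⟨x, by simp [hx, hxy], by simp [hdiag]⟩
    · intro w hw
      rw [mem_filter] at hw ⊢
      exact ⟨hw.1, htr w hw.1 x hx y hy hw.2 hxy⟩
  have hinj : Set.InjOn d T := by
    intro x hx y hy hxy
    by_contra hne
    rcases hxor x hx y hy hne with h | h
    · exact absurd hxy (hlt x hx y hy h.1).ne
    · exact absurd hxy (hlt y hy x hx h.1).ne'
  have himg : T.image d = range s := by
    apply eq_of_subset_of_card_le
    · intro i hi
      obtain ⟨x, hx, rfl⟩ := mem_image.1 hi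
      rw [mem_range, ← hTcard]
      apply card_lt_card
      rw [Finset.ssubset_iff_of_subset (filter_subset _ _)]
      exact ⟨x, hx, by simp [hdiag]⟩
    · rw [card_image_of_injOn hinj, card_range, hTcard]
  have hin : 3 * ∑ z ∈ T, (2 * (d z : ℤ) - (s : ℤ)) ^ 2 = (s : ℤ) * ((s : ℤ) ^ 2 + 2) := by
    rw [← sum_image (f := fun i : ℕ => (2 * (i : ℤ) - (s : ℤ)) ^ 2) hinj, himg, aux_sum]
    ring
  have hle : ∑ z ∈ T, (2 * (d z : ℤ) - (s : ℤ)) ^ 2 ≤ ∑ z, (2 * (d z : ℤ) - (s : ℤ)) ^ 2 :=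
    sum_le_sum_of_subset_of_nonneg (subset_univ _) (fun _ _ _ => sq_nonneg _)
  set a : Fin (4 * m - 1) → Fin (4 * m - 1) → ℤ := fun x z => if A x z = 1 then 1 else 0 with ha
  have hda : ∀ z, (d z : ℤ) = ∑ x ∈ T, a x z := by
    intro z; simp [hd, ha]
  have hrow' : ∀ x, ∑ z, a x z = 2 * m - 1 := by
    intro x
    have := hrow x
    have h2 : ∑ z, a x z = ((univ.filter fun y => A x y = 1).card : ℤ) := by simp [ha]
    rw [h2, this]; omega
  have hpair' : ∀ x y, ∑ z, a x z * a y z = (m - 1) + if x = y then (m : ℤ) else 0 := by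
    intro x y
    split_ifs with h
    · subst h
      have : ∀ z, a x z * a x z = a x z := by intro z; simp [ha]
      simp only [this, hrow']; ring
    · have h3 := hpair x y h
      have h2 : ∑ z, a x z * a y z = ((univ.filter fun z => A x z = 1 ∧ A y z = 1).card : ℤ) := by
        rw [card_filter]; push_cast
        apply sum_congr rfl
        intro z _
        by_cases h1 : A x z = 1 <;> by_cases h2 : A y z = 1 <;> simp [ha, h1, h2]
      rw [h2, h3]; omega
  have hS1 : ∑ z, (d z : ℤ) = s * (2 * m - 1) := by
    simp only [hda]
    rw [sum_comm]
    simp only [hrow', sum_const, hTcard, nsmul_eq_mul]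
  have hS2 : ∑ z, (d z : ℤ) ^ 2 = s * (s * (m - 1) + m) := by
    have : ∀ z, (d z : ℤ) ^ 2 = ∑ x ∈ T, ∑ y ∈ T, a x z * a y z := by
      intro z; rw [hda, sq, sum_mul_sum]
    simp only [this]
    rw [sum_comm]
    have h4 : ∀ x ∈ T, ∑ z, ∑ y ∈ T, a x z * a y z = s * (m - 1) + m := by
      intro x hx
      rw [sum_comm]
      simp only [hpair', sum_add_distrib, sum_ite_eq, hx, if_true, sum_const, hTcard, nsmul_eq_mul]
    rw [sum_congr rfl h4, sum_const, hTcard, nsmul_eq_mul]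
  have htot : ∑ z, (2 * (d z : ℤ) - (s : ℤ)) ^ 2 = (s : ℤ) * (4 * (m : ℤ) - s) := by
    have : ∀ z, (2 * (d z : ℤ) - (s : ℤ)) ^ 2 = 4 * (d z : ℤ) ^ 2 - 4 * (s : ℤ) * (d z : ℤ) + (s : ℤ) ^ 2 := by
      intro z; ring
    simp only [this, sum_add_distrib, sum_sub_distrib, ← mul_sum, hS1, hS2, sum_const, card_univ,
      Fintype.card_fin, nsmul_eq_mul]
    rw [Nat.cast_sub (by omega)]
    push_cast; ring
  have hkey : ((s : ℤ) + 1) * (s + 2) ≤ 12 * m := by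
    rcases Nat.eq_zero_or_pos s with h0 | hpos
    · rw [h0]; push_cast; omega
    · have hp : (0 : ℤ) < s := by exact_mod_cast hpos
      have : (s : ℤ) * (s ^ 2 + 2) ≤ s * (3 * (4 * m - s)) := by
        rw [htot] at hle; linarith
      have := le_of_mul_le_mul_left this hp
      nlinarith
  set k := ⌊Real.sqrt (1 + 12 * (m : ℝ))⌋ with hk
  have hsq : Real.sqrt (1 + 12 * (m : ℝ)) = k := by linarith
  have hk0 : (0 : ℤ) ≤ k := by
    have := Real.sqrt_nonneg (1 + 12 * (m : ℝ))
    rw [hsq] at this; exact_mod_cast this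
  have hk2 : k ^ 2 = 1 + 12 * (m : ℤ) := by
    have := Real.sq_sqrt (show (0 : ℝ) ≤ 1 + 12 * (m : ℝ) by positivity)
    rw [hsq] at this; exact_mod_cast this
  have hfin : (s : ℤ) + 2 ≤ k := by
    by_contra hc
    have : k ≤ s + 1 := by omega
    nlinarith
  rw [hsq]
  have : (s : ℝ) + 2 ≤ k := by exact_mod_cast hfin
  linarith
end

section
/- Let G be a doubly regular tournament on v = 4m−1 vertices (m ≥ 1) containing a transitive subtournament of size s, and let ε = √(1+12m) − ⌊√(1+12m)⌋. If ε ≠ 0 and ⌊√(1+12m)⌋ > (−1 + √(1+48m))/2, then s ≤ −2 + ⌊√(1+12m)⌋. -/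
open Matrix Finset

theorem sum_range_id_int (s : ℕ) : 2 * ∑ i ∈ range s, (i : ℤ) = s * (s - 1) := by
  induction s with
  | zero => simp
  | succ n ih => rw [Finset.sum_range_succ, mul_add, ih]; push_cast; ring

theorem sum_range_sq_int (s : ℕ) :
    6 * ∑ i ∈ range s, (i : ℤ) ^ 2 = s * (s - 1) * (2 * s - 1) := by
  induction s with
  | zero => simp
  | succ n ih => rw [Finset.sum_range_succ, mul_add, ih]; push_cast; ring

theorem trans_sum {v : ℕ} (A : Matrix (Fin v) (Fin v) ℂ) (hd : ∀ x, A x x = 0)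
    (T : Finset (Fin v)) (hT : IsTransSubtournament A T) (g : ℕ → ℤ) :
    ∑ z ∈ T, g ((T.filter fun x => A x z = 1).card) = ∑ i ∈ range T.card, g i := by
  have hlt : ∀ z ∈ T, ∀ w ∈ T, A z w = 1 →
      (T.filter fun x => A x z = 1).card < (T.filter fun x => A x w = 1).card := by
    intro z hz w hw h
    apply Finset.card_lt_card
    rw [Finset.ssubset_iff_of_subset]
    · exact ⟨z, by simp [hz, h], by simp [hd]⟩
    · intro x hx
      simp only [mem_filter] at hx ⊢
      exact ⟨hx.1, hT.2 x hx.1 z hz w hw hx.2 h⟩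
  have hinj : Set.InjOn (fun z => (T.filter fun x => A x z = 1).card) (T : Set (Fin v)) := by
    intro z hz w hw h
    by_contra hne
    simp only at h
    rcases hT.1 z hz w hw hne with h1 | h1
    · have := hlt z hz w hw h1.1; omega
    · have := hlt w hw z hz h1.1; omega
  have himg : T.image (fun z => (T.filter fun x => A x z = 1).card) = range T.card := by
    apply Finset.eq_of_subset_of_card_le
    · intro i hi
      obtain ⟨z, hz, rfl⟩ := Finset.mem_image.1 hi
      rw [mem_range]
      apply Finset.card_lt_card
      rw [Finset.ssubset_iff_of_subset (filter_subset _ _)]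
      exact ⟨z, hz, by simp [hd]⟩
    · rw [Finset.card_image_of_injOn hinj, card_range]
  rw [← himg, Finset.sum_image hinj]

theorem drt_key {m : ℕ} (hm : 1 ≤ m)
    (A : Matrix (Fin (4 * m - 1)) (Fin (4 * m - 1)) ℂ) (hA : IsDRT A)
    (T : Finset (Fin (4 * m - 1))) (hT : IsTransSubtournament A T) :
    ((T.card : ℤ) + 1) * (T.card + 2) ≤ 12 * m := by
  obtain ⟨⟨⟨_, hd⟩, _⟩, _, hreg, hpair⟩ := hA
  set s := T.card with hs
  let a : Fin (4 * m - 1) → ℤ := fun z => ((T.filter fun x => A x z = 1).card : ℤ)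
  have ha : ∀ z, a z = ∑ x ∈ T, if A x z = 1 then (1 : ℤ) else 0 := by
    intro z; simp [a]
  have h1 : ∑ z, a z = s * (2 * m - 1) := by
    simp_rw [ha]
    rw [Finset.sum_comm]
    rw [Finset.sum_congr rfl (g := fun _ => (2 * m - 1 : ℤ))]
    · rw [Finset.sum_const, nsmul_eq_mul]
    · intro x _
      have := hreg x
      rw [Finset.sum_boole, this]
      omega
  have h2 : ∑ z, a z ^ 2 = s * (2 * m - 1) + s * (s - 1) * (m - 1) := by
    have e1 : ∀ z, a z ^ 2 = ∑ x ∈ T, ∑ y ∈ T, if A x z = 1 ∧ A y z = 1 then (1 : ℤ) else 0 := by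
      intro z
      rw [sq, ha, Finset.sum_mul_sum]
      refine Finset.sum_congr rfl fun x _ => Finset.sum_congr rfl fun y _ => ?_
      by_cases hx : A x z = 1 <;> by_cases hy : A y z = 1 <;> simp [hx, hy]
    simp_rw [e1]
    rw [Finset.sum_comm]
    have e2 : ∀ x ∈ T, ∑ z, ∑ y ∈ T, (if A x z = 1 ∧ A y z = 1 then (1 : ℤ) else 0)
        = (2 * m - 1) + (s - 1) * (m - 1) := by
      intro x hx
      rw [Finset.sum_comm]
      rw [← Finset.add_sum_erase _ _ hx]
      congr 1
      · have := hreg x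
        simp only [and_self]
        rw [Finset.sum_boole, this]
        omega
      · rw [Finset.sum_congr rfl (g := fun _ => (m - 1 : ℤ))]
        · rw [Finset.sum_const, Finset.card_erase_of_mem hx, nsmul_eq_mul]
          have : 1 ≤ T.card := Finset.card_pos.2 ⟨x, hx⟩
          push_cast [this]
          rfl
        · intro y hy
          have := hpair x y (Finset.ne_of_mem_erase hy).symm
          rw [Finset.sum_boole, this]
          omega
    rw [Finset.sum_congr rfl e2, Finset.sum_const, nsmul_eq_mul]
    ring
  have t1 : 2 * ∑ z ∈ T, a z = s * (s - 1) := by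
    rw [← sum_range_id_int]
    congr 1
    exact trans_sum A hd T hT (fun i => (i : ℤ))
  have t2 : 6 * ∑ z ∈ T, a z ^ 2 = s * (s - 1) * (2 * s - 1) := by
    rw [← sum_range_sq_int]
    congr 1
    exact trans_sum A hd T hT (fun i => (i : ℤ) ^ 2)
  have hnn : 0 ≤ ∑ z ∈ Tᶜ, (2 * a z - s) ^ 2 := Finset.sum_nonneg fun _ _ => sq_nonneg _
  have hsplit := Finset.sum_add_sum_compl T (fun z => (2 * a z - s) ^ 2)
  have hex : ∀ U : Finset (Fin (4 * m - 1)), ∑ z ∈ U, (2 * a z - s) ^ 2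
      = 4 * ∑ z ∈ U, a z ^ 2 - 4 * s * ∑ z ∈ U, a z + U.card * s ^ 2 := by
    intro U
    rw [Finset.mul_sum, Finset.mul_sum, ← Finset.sum_sub_distrib, ← nsmul_eq_mul,
      ← Finset.sum_const, ← Finset.sum_add_distrib]
    exact Finset.sum_congr rfl fun _ _ => by ring
  rw [hex T, hex univ, h1, h2, Finset.card_univ, Fintype.card_fin] at hsplit
  have hc : ((4 * m - 1 : ℕ) : ℤ) = 4 * m - 1 := by omega
  rw [hc, ← hs] at hsplit
  have hfin : 0 ≤ (s : ℤ) * (12 * m - (s + 1) * (s + 2)) := by nlinarith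
  rcases Nat.eq_zero_or_pos s with h0 | h0
  · rw [h0]; push_cast; omega
  · have : (0 : ℤ) < s := by exact_mod_cast h0
    have := nonneg_of_mul_nonneg_right hfin this
    linarith

/-- If a doubly regular tournament on `v = 4m-1` vertices contains a transitive
subtournament of size `s`, `√(1+12m)` is not an integer and
`⌊√(1+12m)⌋ > (-1 + √(1+48m))/2`, then `s ≤ -2 + ⌊√(1+12m)⌋`. -/
theorem drt_bound_large_floor_case
    {m s : ℕ} (hm : 1 ≤ m)
    (A : Matrix (Fin (4 * m - 1)) (Fin (4 * m - 1)) ℂ) (hA : IsDRT A)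
    (T : Finset (Fin (4 * m - 1))) (hT : IsTransSubtournament A T) (hTcard : T.card = s)
    (heps : Real.sqrt (1 + 12 * (m : ℝ)) - (⌊Real.sqrt (1 + 12 * (m : ℝ))⌋ : ℝ) ≠ 0)
    (hgt : ((⌊Real.sqrt (1 + 12 * (m : ℝ))⌋ : ℝ)) > (-1 + Real.sqrt (1 + 48 * (m : ℝ))) / 2) :
    (s : ℝ) ≤ -2 + (⌊Real.sqrt (1 + 12 * (m : ℝ))⌋ : ℝ) := by
  have key := drt_key hm A hA T hT
  rw [hTcard] at key
  set f := ⌊Real.sqrt (1 + 12 * (m : ℝ))⌋ with hf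
  have hf0 : 0 ≤ f := Int.floor_nonneg.2 (Real.sqrt_nonneg _)
  have hlt : Real.sqrt (1 + 48 * (m : ℝ)) < 2 * (f : ℝ) + 1 := by linarith
  have h0 : (0 : ℝ) ≤ 2 * (f : ℝ) + 1 := by
    have : (0 : ℝ) ≤ f := by exact_mod_cast hf0
    linarith
  rw [Real.sqrt_lt' (lt_of_le_of_lt (Real.sqrt_nonneg _) hlt)] at hlt
  have hlt2 : 1 + 48 * (m : ℤ) < (2 * f + 1) ^ 2 := by exact_mod_cast hlt
  have : (s : ℤ) ≤ -2 + f := by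
    by_contra hcon
    have h3 : f ≤ s + 1 := by omega
    nlinarith
  exact_mod_cast this
end
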